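/- arXiv:2503.10251 — 2 statements merged into one kernel-verified Lean document; each statement's English description precedes it below -/
import Mathlib

section
/- Let x ∈ ℝ^d be nonzero and let f : ℝ^d → ℝ^D be twice continuously Fréchet differentiable in an open neighbourhood of x, with f(x) having all entries nonzero. Then there exists β* > 0 such that for every fixed 0 ≤ β < β* and every x̂ ∈ ℝ^d with ρ_c(x̂, x) ≤ β, and for any floating-point evaluation scheme for f: ρ_c( fl(f(x̂)), f(x) ) ≤ ρ_c( fl(f(x̂)), f(x̂) ) + κ_{c,c}(f, x) · ρ_c(x̂, x) + C·(u² + ρ_c(x̂, x)²), where the hidden constant C depends on x, β and f but not on x̂ or u, under the convention that the asymptotic remainder is interpreted with fl(f(x̂)) having componentwise relative error O(u) relative to f(x̂) (the inequality holds trivially if this error is infinite). -/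
open scoped BigOperators ENNReal

noncomputable section

namespace TR

/-! ### Norms and basic quantities -/

/-- Euclidean (ℓ₂) norm of a vector. -/
def l2 {d : ℕ} (x : Fin d → ℝ) : ℝ := Real.sqrt (∑ i, x i ^ 2)

/-- ℓ_∞ norm of a vector. -/
def linf {d : ℕ} (x : Fin d → ℝ) : ℝ := ⨆ i, |x i|

/-- "ℓ_{−∞}" functional: the minimal absolute value of the entries. -/
def lminf {d : ℕ} (x : Fin d → ℝ) : ℝ := ⨅ i, |x i|

/-- ℓ₁ norm of a vector. -/
def l1 {d : ℕ} (x : Fin d → ℝ) : ℝ := ∑ i, |x i|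

/-- γ_k = k u / (1 − k u). -/
def gam (k : ℕ) (u : ℝ) : ℝ := (k : ℝ) * u / (1 - (k : ℝ) * u)

/-- entrywise absolute value of a matrix. -/
def matAbs {a b : ℕ} (B : Matrix (Fin a) (Fin b) ℝ) : Matrix (Fin a) (Fin b) ℝ :=
  Matrix.of fun i j => |B i j|

/-- largest singular value: supremum of ‖Bx‖₂ over ℓ₂-unit vectors. -/
def sigmaMax {d : ℕ} (B : Matrix (Fin d) (Fin d) ℝ) : ℝ :=
  ⨆ x : {x : Fin d → ℝ // l2 x = 1}, l2 (fun i => ∑ j, B i j * x.1 j)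

/-- smallest singular value: infimum of ‖Bx‖₂ over ℓ₂-unit vectors. -/
def sigmaMin {d : ℕ} (B : Matrix (Fin d) (Fin d) ℝ) : ℝ :=
  ⨅ x : {x : Fin d → ℝ // l2 x = 1}, l2 (fun i => ∑ j, B i j * x.1 j)

/-- matrix (1,∞) operator norm: max of absolute values of entries. -/
def norm1inf {a b : ℕ} (B : Matrix (Fin a) (Fin b) ℝ) : ℝ := ⨆ p : Fin a × Fin b, |B p.1 p.2|

/-- matrix (∞,∞) operator norm: max row ℓ₁ norm. -/
def norminfinf {a b : ℕ} (B : Matrix (Fin a) (Fin b) ℝ) : ℝ := ⨆ i, ∑ j, |B i j|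

/-- matrix (1,1) operator norm: max column ℓ₁ norm. -/
def norm11 {a b : ℕ} (B : Matrix (Fin a) (Fin b) ℝ) : ℝ := ⨆ j, ∑ i, |B i j|

/-! ### Componentwise relative distance -/

/-- Componentwise relative distance between vectors, with the conventions
`t/0 = ∞` for `t ≠ 0` and `0/0 = 0`. -/
def rhoV {d : ℕ} (xh x : Fin d → ℝ) : ℝ≥0∞ :=
  ⨆ i, (if x i = 0 then (if xh i = 0 then (0 : ℝ≥0∞) else ⊤)
        else ENNReal.ofReal (|xh i - x i| / |x i|))

/-- Componentwise relative distance between matrices given by their columns. -/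
def rhoM {d n : ℕ} (Xh X : Fin n → Fin d → ℝ) : ℝ≥0∞ := ⨆ t, rhoV (Xh t) (X t)

/-! ### Exact transformer components -/

/-- RMS layer normalization `R(x) = √d · x / ‖x‖₂`. -/
def rmsN {d : ℕ} (x : Fin d → ℝ) : Fin d → ℝ := fun i => Real.sqrt d * x i / l2 x

/-- sample mean. -/
def meanv {d : ℕ} (x : Fin d → ℝ) : ℝ := (∑ i, x i) / d

/-- centring `c̊(x) = x − μ(x) e`. -/
def centr {d : ℕ} (x : Fin d → ℝ) : Fin d → ℝ := fun i => x i - meanv x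

/-- layer normalization `N(x) = √d · c̊(x)/‖c̊(x)‖₂ = (x − μ(x)e)/√ν(x)`. -/
def layerN {d : ℕ} (x : Fin d → ℝ) : Fin d → ℝ := rmsN (centr x)

/-- softmax. -/
def softmax {m : ℕ} (s : Fin m → ℝ) : Fin m → ℝ :=
  fun i => Real.exp (s i) / ∑ j, Real.exp (s j)

/-- affine map `x ↦ A x + b`. -/
def affine {k m : ℕ} (A : Matrix (Fin k) (Fin m) ℝ) (b : Fin k → ℝ) (x : Fin m → ℝ) :
    Fin k → ℝ :=
  fun i => (∑ j, A i j * x j) + b i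

/-- two-layer perceptron `M = L₂ ∘ ReLU ∘ L₁`. -/
def tlp {d D : ℕ} (A1 : Matrix (Fin D) (Fin d) ℝ) (b1 : Fin D → ℝ)
    (A2 : Matrix (Fin d) (Fin D) ℝ) (b2 : Fin d → ℝ) (x : Fin d → ℝ) : Fin d → ℝ :=
  affine A2 b2 (fun i => max 0 (affine A1 b1 x i))

/-- the matrix of the first `t+1` columns of `X` (columns are `X 0, …, X t`). -/
def prefixCols {d n : ℕ} (X : Fin n → Fin d → ℝ) (t : Fin n) : Fin (t.1 + 1) → Fin d → ℝ :=
  fun i => X (Fin.castLE t.isLt i)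

/-- similarity scores `S(Z) = (1/√d) (W_k Z)ᵀ (W_q z_last)`. -/
def simScores {d m : ℕ} (Wq Wk : Matrix (Fin d) (Fin d) ℝ)
    (Z : Fin (m + 1) → Fin d → ℝ) : Fin (m + 1) → ℝ :=
  fun i => (1 / Real.sqrt d) * ∑ a, (∑ b, Wk a b * Z i b) * (∑ b, Wq a b * Z (Fin.last m) b)

/-- masked single-head self-attention: the `t`-th column of `A(X)` is
`W_v X_t ψ(S(X_t))`. -/
def attn {d n : ℕ} (Wq Wk Wv : Matrix (Fin d) (Fin d) ℝ) (X : Fin n → Fin d → ℝ) :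
    Fin n → Fin d → ℝ :=
  fun t i => ∑ a, Wv i a * ∑ j : Fin (t.1 + 1),
    softmax (simScores Wq Wk (prefixCols X t)) j * prefixCols X t j a

/-- transformer configuration. -/
structure Config (d D : ℕ) where
  A1 : Matrix (Fin D) (Fin d) ℝ
  b1 : Fin D → ℝ
  A2 : Matrix (Fin d) (Fin D) ℝ
  b2 : Fin d → ℝ
  Wq : Matrix (Fin d) (Fin d) ℝ
  Wk : Matrix (Fin d) (Fin d) ℝ
  Wv : Matrix (Fin d) (Fin d) ℝ

/-- transformer block with RMS layer normalization
`Q_Θ = (Id + M* ∘ R*) ∘ (Id + A ∘ R*)`. -/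
def Qblock {d D n : ℕ} (c : Config d D) (X : Fin n → Fin d → ℝ) : Fin n → Fin d → ℝ :=
  let Y : Fin n → Fin d → ℝ :=
    fun t i => X t i + attn c.Wq c.Wk c.Wv (fun s => rmsN (X s)) t i
  fun t i => Y t i + tlp c.A1 c.b1 c.A2 c.b2 (rmsN (Y t)) i

/-- transformer block with layer normalization
`T_Θ = (Id + M* ∘ N*) ∘ (Id + A ∘ N*)`. -/
def Tblock {d D n : ℕ} (c : Config d D) (X : Fin n → Fin d → ℝ) : Fin n → Fin d → ℝ :=
  let Y : Fin n → Fin d → ℝ :=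
    fun t i => X t i + attn c.Wq c.Wk c.Wv (fun s => layerN (X s)) t i
  fun t i => Y t i + tlp c.A1 c.b1 c.A2 c.b2 (layerN (Y t)) i

/-! ### Floating-point model -/

/-- `a` is the rounded value of `b`: `a = b (1+δ)`, `|δ| ≤ u`. -/
def Fp (u a b : ℝ) : Prop := ∃ δ : ℝ, |δ| ≤ u ∧ a = b * (1 + δ)

/-- recursive summation of a list in floating-point arithmetic. -/
inductive FlSumL (u : ℝ) : List ℝ → ℝ → Prop
  | nil : FlSumL u [] 0
  | single (x : ℝ) : FlSumL u [x] x
  | cons (x y : ℝ) (l : List ℝ) (s r : ℝ) :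
      FlSumL u (y :: l) s → Fp u r (x + s) → FlSumL u (x :: y :: l) r

/-- recursive summation of the values of a finite family. -/
def FlSum (u : ℝ) {m : ℕ} (f : Fin m → ℝ) (r : ℝ) : Prop := FlSumL u (List.ofFn f) r

/-- floating-point inner product: rounded products, recursive summation. -/
def FlDot (u : ℝ) {m : ℕ} (x y : Fin m → ℝ) (r : ℝ) : Prop :=
  ∃ p : Fin m → ℝ, (∀ i, Fp u (p i) (x i * y i)) ∧ FlSum u p r

/-- floating-point matrix-vector product. -/
def FlMulVec (u : ℝ) {k m : ℕ} (A : Matrix (Fin k) (Fin m) ℝ) (x : Fin m → ℝ)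
    (r : Fin k → ℝ) : Prop :=
  ∀ i, FlDot u (A i) x (r i)

/-- floating-point evaluation of `x ↦ Ax + b`. -/
def FlAffine (u : ℝ) {k m : ℕ} (A : Matrix (Fin k) (Fin m) ℝ) (b : Fin k → ℝ)
    (x : Fin m → ℝ) (r : Fin k → ℝ) : Prop :=
  ∃ w : Fin k → ℝ, FlMulVec u A x w ∧ ∀ i, Fp u (r i) (w i + b i)

/-- floating-point evaluation of the two-layer perceptron (ReLU is exact). -/
def FlTLP (u : ℝ) {d D : ℕ} (A1 : Matrix (Fin D) (Fin d) ℝ) (b1 : Fin D → ℝ)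
    (A2 : Matrix (Fin d) (Fin D) ℝ) (b2 : Fin d → ℝ) (x : Fin d → ℝ) (r : Fin d → ℝ) : Prop :=
  ∃ w : Fin D → ℝ, FlAffine u A1 b1 x w ∧ FlAffine u A2 b2 (fun i => max 0 (w i)) r

/-- floating-point evaluation of the Euclidean norm: squares, recursive
summation, square root. -/
def FlL2 (u : ℝ) {m : ℕ} (x : Fin m → ℝ) (r : ℝ) : Prop :=
  ∃ sq : Fin m → ℝ, (∀ i, Fp u (sq i) (x i * x i)) ∧
    ∃ s : ℝ, FlSum u sq s ∧ Fp u r (Real.sqrt s)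

/-- floating-point evaluation of the RMS layer normalization. -/
def FlRMS (u : ℝ) {d : ℕ} (x : Fin d → ℝ) (r : Fin d → ℝ) : Prop :=
  ∃ nrm : ℝ, FlL2 u x nrm ∧
    ∀ i, ∃ t : ℝ, Fp u t (Real.sqrt d * x i) ∧ Fp u (r i) (t / nrm)

/-- floating-point evaluation of the centring. -/
def FlCentr (u : ℝ) {d : ℕ} (x : Fin d → ℝ) (r : Fin d → ℝ) : Prop :=
  ∃ s m : ℝ, FlSum u x s ∧ Fp u m (s / (d : ℝ)) ∧ ∀ i, Fp u (r i) (x i - m)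

/-- floating-point evaluation of the layer normalization: centring followed by
RMS normalization of the centred vector. -/
def FlLN (u : ℝ) {d : ℕ} (x : Fin d → ℝ) (r : Fin d → ℝ) : Prop :=
  ∃ c : Fin d → ℝ, FlCentr u x c ∧ FlRMS u c r

/-- floating-point evaluation of the softmax. -/
def FlSoftmax (u : ℝ) {m : ℕ} (s : Fin m → ℝ) (r : Fin m → ℝ) : Prop :=
  ∃ ex : Fin m → ℝ, (∀ i, Fp u (ex i) (Real.exp (s i))) ∧
    ∃ tot : ℝ, FlSum u ex tot ∧ ∀ i, Fp u (r i) (ex i / tot)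

/-- floating-point evaluation of the similarity scores. -/
def FlSim (u : ℝ) {d m : ℕ} (Wq Wk : Matrix (Fin d) (Fin d) ℝ)
    (Z : Fin (m + 1) → Fin d → ℝ) (r : Fin (m + 1) → ℝ) : Prop :=
  ∃ q : Fin d → ℝ, FlMulVec u Wq (Z (Fin.last m)) q ∧
    ∀ i, ∃ kv : Fin d → ℝ, ∃ dp : ℝ, FlMulVec u Wk (Z i) kv ∧ FlDot u q kv dp ∧
      Fp u (r i) (dp / Real.sqrt d)

/-- floating-point evaluation of the self-attention. -/
def FlAttn (u : ℝ) {d n : ℕ} (Wq Wk Wv : Matrix (Fin d) (Fin d) ℝ)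
    (X : Fin n → Fin d → ℝ) (r : Fin n → Fin d → ℝ) : Prop :=
  ∀ t : Fin n, ∃ s psi : Fin (t.1 + 1) → ℝ, ∃ z : Fin d → ℝ,
    FlSim u Wq Wk (prefixCols X t) s ∧ FlSoftmax u s psi ∧
    (∀ a : Fin d, FlDot u (fun j => prefixCols X t j a) psi (z a)) ∧
    FlMulVec u Wv z (r t)

/-- floating-point evaluation of `X ↦ X + A(R*(X))`. -/
def FlResAttnRMS (u : ℝ) {d n : ℕ} (Wq Wk Wv : Matrix (Fin d) (Fin d) ℝ)
    (X r : Fin n → Fin d → ℝ) : Prop :=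
  ∃ RX G : Fin n → Fin d → ℝ, (∀ t, FlRMS u (X t) (RX t)) ∧ FlAttn u Wq Wk Wv RX G ∧
    ∀ t i, Fp u (r t i) (X t i + G t i)

/-- floating-point evaluation of `X ↦ X + A(N*(X))`. -/
def FlResAttnLN (u : ℝ) {d n : ℕ} (Wq Wk Wv : Matrix (Fin d) (Fin d) ℝ)
    (X r : Fin n → Fin d → ℝ) : Prop :=
  ∃ NX G : Fin n → Fin d → ℝ, (∀ t, FlLN u (X t) (NX t)) ∧ FlAttn u Wq Wk Wv NX G ∧
    ∀ t i, Fp u (r t i) (X t i + G t i)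

/-- floating-point evaluation of `x ↦ x + M(R(x))`. -/
def FlResTlpRMS (u : ℝ) {d D : ℕ} (A1 : Matrix (Fin D) (Fin d) ℝ) (b1 : Fin D → ℝ)
    (A2 : Matrix (Fin d) (Fin D) ℝ) (b2 : Fin d → ℝ) (x r : Fin d → ℝ) : Prop :=
  ∃ rx m : Fin d → ℝ, FlRMS u x rx ∧ FlTLP u A1 b1 A2 b2 rx m ∧
    ∀ i, Fp u (r i) (x i + m i)

/-- floating-point evaluation of `x ↦ x + M(N(x))`. -/
def FlResTlpLN (u : ℝ) {d D : ℕ} (A1 : Matrix (Fin D) (Fin d) ℝ) (b1 : Fin D → ℝ)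
    (A2 : Matrix (Fin d) (Fin D) ℝ) (b2 : Fin d → ℝ) (x r : Fin d → ℝ) : Prop :=
  ∃ nx m : Fin d → ℝ, FlLN u x nx ∧ FlTLP u A1 b1 A2 b2 nx m ∧
    ∀ i, Fp u (r i) (x i + m i)

/-- floating-point evaluation of the transformer block with RMS normalization. -/
def FlQBlock (u : ℝ) {d D n : ℕ} (c : Config d D) (X R : Fin n → Fin d → ℝ) : Prop :=
  ∃ RX G Y RY M : Fin n → Fin d → ℝ,
    (∀ t, FlRMS u (X t) (RX t)) ∧
    FlAttn u c.Wq c.Wk c.Wv RX G ∧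
    (∀ t i, Fp u (Y t i) (X t i + G t i)) ∧
    (∀ t, FlRMS u (Y t) (RY t)) ∧
    (∀ t, FlTLP u c.A1 c.b1 c.A2 c.b2 (RY t) (M t)) ∧
    (∀ t i, Fp u (R t i) (Y t i + M t i))

/-- floating-point evaluation of the transformer block with layer
normalization. -/
def FlTBlock (u : ℝ) {d D n : ℕ} (c : Config d D) (X R : Fin n → Fin d → ℝ) : Prop :=
  ∃ NX G Y NY M : Fin n → Fin d → ℝ,
    (∀ t, FlLN u (X t) (NX t)) ∧
    FlAttn u c.Wq c.Wk c.Wv NX G ∧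
    (∀ t i, Fp u (Y t i) (X t i + G t i)) ∧
    (∀ t, FlLN u (Y t) (NY t)) ∧
    (∀ t, FlTLP u c.A1 c.b1 c.A2 c.b2 (NY t) (M t)) ∧
    (∀ t i, Fp u (R t i) (Y t i + M t i))

/-- floating-point evaluation of a deep transformer with RMS normalization. -/
def FlQDeep (u : ℝ) {d D n L : ℕ} (cfg : Fin L → Config d D)
    (X R : Fin n → Fin d → ℝ) : Prop :=
  ∃ Z : Fin (L + 1) → Fin n → Fin d → ℝ, Z 0 = X ∧ Z (Fin.last L) = R ∧
    ∀ l : Fin L, FlQBlock u (cfg l) (Z l.castSucc) (Z l.succ)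

/-- floating-point evaluation of a deep transformer with layer normalization. -/
def FlTDeep (u : ℝ) {d D n L : ℕ} (cfg : Fin L → Config d D)
    (X R : Fin n → Fin d → ℝ) : Prop :=
  ∃ Z : Fin (L + 1) → Fin n → Fin d → ℝ, Z 0 = X ∧ Z (Fin.last L) = R ∧
    ∀ l : Fin L, FlTBlock u (cfg l) (Z l.castSucc) (Z l.succ)

/-! ### Condition numbers and amplification factors -/

/-- componentwise condition number of a vector-valued map. -/
def kccV {d k : ℕ} (f : (Fin d → ℝ) → (Fin k → ℝ)) (x : Fin d → ℝ) : ℝ :=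
  ⨆ i, (∑ j, |fderiv ℝ f x (Pi.single j 1) i * x j|) / |f x i|

/-- componentwise condition number of a matrix-valued map (matrices given by
their columns). -/
def kccM {d n : ℕ} (f : (Fin n → Fin d → ℝ) → (Fin n → Fin d → ℝ))
    (X : Fin n → Fin d → ℝ) : ℝ :=
  ⨆ p : Fin n × Fin d, (∑ q : Fin n × Fin d,
      |fderiv ℝ f X (Pi.single q.1 (Pi.single q.2 1)) p.1 p.2 * X q.1 q.2|) / |f X p.1 p.2|

/-- cancellation factor of a residual connection, vector version. -/
def xiResV {d : ℕ} (x g : Fin d → ℝ) : ℝ := ⨆ i, (|x i| + |g i|) / |x i + g i|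

/-- cancellation factor of a residual connection, matrix version. -/
def xiRes {d n : ℕ} (X G : Fin n → Fin d → ℝ) : ℝ :=
  ⨆ p : Fin n × Fin d, (|X p.1 p.2| + |G p.1 p.2|) / |X p.1 p.2 + G p.1 p.2|

/-- positive support `Ω = supp₊(L₁(z))`. -/
def posSupp {d D : ℕ} (A1 : Matrix (Fin D) (Fin d) ℝ) (b1 : Fin D → ℝ)
    (z : Fin d → ℝ) : Finset (Fin D) :=
  Finset.univ.filter fun k => 0 < affine A1 b1 z k

/-- amplification factor ξ(M, z) of the two-layer perceptron. -/
def xiM {d D : ℕ} (A1 : Matrix (Fin D) (Fin d) ℝ) (b1 : Fin D → ℝ)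
    (A2 : Matrix (Fin d) (Fin D) ℝ) (b2 : Fin d → ℝ) (z : Fin d → ℝ) : ℝ :=
  ⨆ i : Fin d, ((∑ k ∈ posSupp A1 b1 z, |A2 i k| * ((∑ j, |A1 k j| * |z j|) + |b1 k|)) + |b2 i|) /
    |tlp A1 b1 A2 b2 z i|

/-- amplification factor ξ(S, Z) of the similarity scores. -/
def xiSim {d m : ℕ} (Wq Wk : Matrix (Fin d) (Fin d) ℝ)
    (Z : Fin (m + 1) → Fin d → ℝ) : ℝ :=
  ⨆ i, ((1 / Real.sqrt d) *
      ∑ a, (∑ b, |Wk a b| * |Z i b|) * (∑ b, |Wq a b| * |Z (Fin.last m) b|)) /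
    |simScores Wq Wk Z i|

/-- amplification factor ξ(A, Z) of the self-attention. -/
def xiAttn {d n : ℕ} (Wq Wk Wv : Matrix (Fin d) (Fin d) ℝ) (Z : Fin n → Fin d → ℝ) : ℝ :=
  ⨆ p : Fin d × Fin n,
    (∑ j : Fin (p.2.1 + 1), (∑ a, |Wv p.1 a| * |prefixCols Z p.2 j a|) *
        softmax (simScores Wq Wk (prefixCols Z p.2)) j) /
    |∑ j : Fin (p.2.1 + 1), (∑ a, Wv p.1 a * prefixCols Z p.2 j a) *
        softmax (simScores Wq Wk (prefixCols Z p.2)) j|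

/-!
Writing `t = ρ_c(x̂, x)`, the first-order part `f'(x)(x̂ - x)` of `f(x̂) - f(x)` is bounded
entrywise by `κ t |f(x)|`, and the Taylor remainder is `O(t²)`, uniformly relative to the nonzero
entries of `f(x)`; hence `ρ_c(f(x̂), f(x)) ≤ κ t + C t²`. Relative distances compose with a
quadratic defect, `ρ_c(y, f(x)) ≤ e + δ + e δ` for `e = ρ_c(y, f(x̂))` and `δ = ρ_c(f(x̂), f(x))`.
As `e = O(u)` and `δ = O(t)`, the defect is `O(u t) = O(u² + t²)`.
-/

open Asymptotics Topology

section RelativeDistance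

variable {d : ℕ} {x y z : Fin d → ℝ} {t : ℝ}

lemma rhoV_le_ofReal_iff (ht : 0 ≤ t) :
    rhoV y x ≤ ENNReal.ofReal t ↔ ∀ i, |y i - x i| ≤ t * |x i| := by
  simp only [rhoV, iSup_le_iff]
  refine forall_congr' fun i ↦ ?_
  by_cases hx : x i = 0
  · by_cases hy : y i = 0 <;> simp [hx, hy]
  · rw [if_neg hx, ENNReal.ofReal_le_ofReal_iff ht, div_le_iff₀ (abs_pos.2 hx)]

lemma abs_sub_le_toReal_rhoV_mul_abs (h : rhoV y x ≠ ⊤) (i : Fin d) :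
    |y i - x i| ≤ (rhoV y x).toReal * |x i| :=
  (rhoV_le_ofReal_iff ENNReal.toReal_nonneg).1 (ENNReal.ofReal_toReal h).ge i

lemma norm_sub_le_toReal_rhoV_mul_norm (h : rhoV y x ≠ ⊤) :
    ‖y - x‖ ≤ (rhoV y x).toReal * ‖x‖ := by
  refine (pi_norm_le_iff_of_nonneg (by positivity)).2 fun i ↦ ?_
  grw [← norm_le_pi_norm x i]
  exact abs_sub_le_toReal_rhoV_mul_abs h i

lemma rhoV_le_add_add_mul :
    rhoV y x ≤ rhoV y z + rhoV z x + rhoV y z * rhoV z x := by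
  by_cases hyz : rhoV y z = ⊤
  · simp [hyz]
  by_cases hzx : rhoV z x = ⊤
  · simp [hzx]
  rw [← ENNReal.ofReal_toReal hyz, ← ENNReal.ofReal_toReal hzx,
    ← ENNReal.ofReal_mul (by positivity), ← ENNReal.ofReal_add (by positivity) (by positivity),
    ← ENNReal.ofReal_add (by positivity) (by positivity), rhoV_le_ofReal_iff (by positivity)]
  intro i
  have hy := abs_sub_le_toReal_rhoV_mul_abs hyz i
  have hz := abs_sub_le_toReal_rhoV_mul_abs hzx i
  have hz_abs : |z i| ≤ |z i - x i| + |x i| := by simpa using abs_add_le (z i - x i) (x i)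
  set a := (rhoV y z).toReal
  set b := (rhoV z x).toReal
  calc |y i - x i| ≤ |y i - z i| + |z i - x i| := abs_sub_le _ _ _
    _ ≤ a * (b * |x i| + |x i|) + b * |x i| := by grw [hy, hz_abs, hz]
    _ = (a + b + a * b) * |x i| := by ring

end RelativeDistance

section ConditionNumber

lemma abs_apply_le_mul_sum_abs {ι R : Type*} [Fintype ι] [DecidableEq ι] [CommRing R]
    [LinearOrder R] [IsStrictOrderedRing R] (g : (ι → R) →ₗ[R] R) {x h : ι → R} {t : R}
    (hh : ∀ j, |h j| ≤ t * |x j|) :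
    |g h| ≤ t * ∑ j, |g (Pi.single j 1) * x j| :=
  calc |g h| = |∑ j, h j * g (Pi.single j 1)| := by
        conv_lhs => rw [pi_eq_sum_univ' h]
        simp
    _ ≤ ∑ j, |h j| * |g (Pi.single j 1)| := by
        simpa only [abs_mul] using
          Finset.abs_sum_le_sum_abs (fun j ↦ h j * g (Pi.single j 1)) Finset.univ
    _ ≤ ∑ j, t * |x j| * |g (Pi.single j 1)| := by gcongr with j; exact hh j
    _ = t * ∑ j, |g (Pi.single j 1) * x j| := by
        rw [Finset.mul_sum]
        exact Finset.sum_congr rfl fun j _ ↦ by rw [abs_mul]; ring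

variable {d D : ℕ} {f : (Fin d → ℝ) → (Fin D → ℝ)} {x : Fin d → ℝ}

variable (f x) in
lemma kccV_nonneg : 0 ≤ kccV f x :=
  Real.iSup_nonneg fun _ ↦ by positivity

lemma sum_abs_fderiv_mul_le_kccV_mul_abs {i : Fin D} (hfx : f x i ≠ 0) :
    ∑ j, |fderiv ℝ f x (Pi.single j 1) i * x j| ≤ kccV f x * |f x i| :=
  (div_le_iff₀ (abs_pos.2 hfx)).1 <|
    le_ciSup (f := fun i ↦ (∑ j, |fderiv ℝ f x (Pi.single j 1) i * x j|) / |f x i|)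
      (Set.finite_range _).bddAbove i

lemma abs_fderiv_apply_le_kccV_mul {i : Fin D} (hfx : f x i ≠ 0) {h : Fin d → ℝ} {t : ℝ}
    (ht : 0 ≤ t) (hh : ∀ j, |h j| ≤ t * |x j|) :
    |fderiv ℝ f x h i| ≤ kccV f x * t * |f x i| :=
  calc |fderiv ℝ f x h i| ≤ t * ∑ j, |fderiv ℝ f x (Pi.single j 1) i * x j| :=
        abs_apply_le_mul_sum_abs (LinearMap.proj i ∘ₗ (fderiv ℝ f x).toLinearMap) hh
    _ ≤ t * (kccV f x * |f x i|) := by grw [sum_abs_fderiv_mul_le_kccV_mul_abs hfx]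
    _ = kccV f x * t * |f x i| := by ring

end ConditionNumber

section Taylor

section QuadraticRemainder

variable {E F : Type*} [NormedAddCommGroup E] [NormedSpace ℝ E] [NormedAddCommGroup F]
  [NormedSpace ℝ F] {f : E → F} {x : E}

lemma isBigO_sub_sub_fderiv_sq
    (hf : ∀ᶠ z in 𝓝 x, DifferentiableAt ℝ f z) (hf' : DifferentiableAt ℝ (fderiv ℝ f) x) :
    (fun z ↦ f z - f x - fderiv ℝ f x (z - x)) =O[𝓝 x] fun z ↦ ‖z - x‖ ^ 2 := by
  have hderiv : ∀ᶠ z in 𝓝 x, HasFDerivAt (fun z ↦ f z - f x - fderiv ℝ f x (z - x))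
      (fderiv ℝ f z - fderiv ℝ f x) z := by
    filter_upwards [hf] with z hz
    exact (hz.hasFDerivAt.sub_const _).sub
      ((fderiv ℝ f x).hasFDerivAt.comp z ((hasFDerivAt_id z).sub_const x))
  have hO : fderiv ℝ (fun z ↦ f z - f x - fderiv ℝ f x (z - x)) =O[𝓝 x]
      fun z ↦ ‖z - x‖ ^ (1 : ℝ) := by
    refine hf'.isBigO_sub.norm_right.congr' ?_ (by simp)
    filter_upwards [hderiv] with z hz using hz.fderiv.symm
  refine (isBigO_norm_rpow_add_one_of_fderiv_of_apply_eq_zero zero_le_one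
    (hderiv.mono fun z hz ↦ hz.differentiableAt) hO (by simp)).congr_right fun z ↦ ?_
  rw [one_add_one_eq_two, Real.rpow_two]

lemma isBigO_sub_sub_fderiv_sq_of_contDiffAt (hf : ContDiffAt ℝ 2 f x) :
    (fun z ↦ f z - f x - fderiv ℝ f x (z - x)) =O[𝓝 x] fun z ↦ ‖z - x‖ ^ 2 :=
  isBigO_sub_sub_fderiv_sq
    ((hf.eventually (by simp)).mono fun _ hz ↦ hz.differentiableAt two_ne_zero)
    ((hf.fderiv_right_succ (n := 1)).differentiableAt one_ne_zero)

end QuadraticRemainder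

lemma one_le_norm_inv_mul_abs {ι : Type*} [Fintype ι] {v : ι → ℝ} {i : ι} (hi : v i ≠ 0) :
    1 ≤ ‖v⁻¹‖ * |v i| := by
  grw [← norm_le_pi_norm v⁻¹ i]
  simp [hi]

variable {d D : ℕ} {x xh : Fin d → ℝ} {f : (Fin d → ℝ) → (Fin D → ℝ)}

lemma rhoV_apply_le_of_norm_sub_sub_fderiv_le {c : ℝ} (hc : 0 ≤ c) (hfx : ∀ i, f x i ≠ 0)
    (hrem : ‖f xh - f x - fderiv ℝ f x (xh - x)‖ ≤ c * ‖xh - x‖ ^ 2) (hxh : rhoV xh x ≠ ⊤) :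
    rhoV (f xh) (f x) ≤ ENNReal.ofReal (kccV f x * (rhoV xh x).toReal
      + c * ‖x‖ ^ 2 * ‖(f x)⁻¹‖ * (rhoV xh x).toReal ^ 2) := by
  have hκ : 0 ≤ kccV f x := kccV_nonneg f x
  have hcomp := abs_sub_le_toReal_rhoV_mul_abs hxh
  have hnorm := norm_sub_le_toReal_rhoV_mul_norm hxh
  have ht : 0 ≤ (rhoV xh x).toReal := ENNReal.toReal_nonneg
  set t := (rhoV xh x).toReal
  rw [rhoV_le_ofReal_iff (by positivity)]
  intro i
  have hlin : |fderiv ℝ f x (xh - x) i| ≤ kccV f x * t * |f x i| :=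
    abs_fderiv_apply_le_kccV_mul (hfx i) ht hcomp
  have hquad : |f xh i - f x i - fderiv ℝ f x (xh - x) i| ≤
      c * ‖x‖ ^ 2 * ‖(f x)⁻¹‖ * t ^ 2 * |f x i| :=
    calc |f xh i - f x i - fderiv ℝ f x (xh - x) i|
        ≤ ‖f xh - f x - fderiv ℝ f x (xh - x)‖ := norm_le_pi_norm (f xh - f x - _) i
      _ ≤ c * (t * ‖x‖) ^ 2 * 1 := by grw [hrem, hnorm, mul_one]
      _ ≤ c * (t * ‖x‖) ^ 2 * (‖(f x)⁻¹‖ * |f x i|) := by grw [one_le_norm_inv_mul_abs (hfx i)]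
      _ = c * ‖x‖ ^ 2 * ‖(f x)⁻¹‖ * t ^ 2 * |f x i| := by ring
  calc |f xh i - f x i|
      ≤ |f xh i - f x i - fderiv ℝ f x (xh - x) i| + |fderiv ℝ f x (xh - x) i| := by
        simpa using abs_add_le (f xh i - f x i - fderiv ℝ f x (xh - x) i)
          (fderiv ℝ f x (xh - x) i)
    _ ≤ c * ‖x‖ ^ 2 * ‖(f x)⁻¹‖ * t ^ 2 * |f x i| + kccV f x * t * |f x i| := by
        grw [hquad, hlin]
    _ = (kccV f x * t + c * ‖x‖ ^ 2 * ‖(f x)⁻¹‖ * t ^ 2) * |f x i| := by ring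

lemma exists_rhoV_apply_le
    (hf : (fun z ↦ f z - f x - fderiv ℝ f x (z - x)) =O[𝓝 x] fun z ↦ ‖z - x‖ ^ 2)
    (hfx : ∀ i, f x i ≠ 0) :
    ∃ β > 0, ∃ C ≥ 0, ∀ xh, rhoV xh x ≤ ENNReal.ofReal β →
      rhoV (f xh) (f x) ≤
        ENNReal.ofReal (kccV f x * (rhoV xh x).toReal + C * (rhoV xh x).toReal ^ 2) := by
  obtain ⟨c, hc, hO⟩ := hf.exists_nonneg
  obtain ⟨r, hr, hrem⟩ := Metric.eventually_nhds_iff.1 hO.bound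
  obtain ⟨β, hβ, hβr⟩ := exists_pos_mul_lt hr ‖x‖
  refine ⟨β, hβ, c * ‖x‖ ^ 2 * ‖(f x)⁻¹‖, by positivity, fun xh hxh ↦ ?_⟩
  have hfin : rhoV xh x ≠ ⊤ := ne_top_of_le_ne_top ENNReal.ofReal_ne_top hxh
  have hball : dist xh x < r :=
    calc dist xh x ≤ (rhoV xh x).toReal * ‖x‖ := by
          simpa only [dist_eq_norm] using norm_sub_le_toReal_rhoV_mul_norm hfin
      _ ≤ ‖x‖ * β := by grw [ENNReal.toReal_le_of_le_ofReal hβ.le hxh, mul_comm]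
      _ < r := hβr
  exact rhoV_apply_le_of_norm_sub_sub_fderiv_le hc hfx (by simpa using hrem hball) hfin

end Taylor

lemma mul_linear_add_sq_le_mul_sq_add_sq {κ C K β u t e : ℝ} (hκ : 0 ≤ κ) (hC : 0 ≤ C)
    (hK : 0 ≤ K) (hu : 0 ≤ u) (ht : 0 ≤ t) (htβ : t ≤ β) (heu : e ≤ K * u) :
    e * (κ * t + C * t ^ 2) ≤ K * (κ + C * β) * (u ^ 2 + t ^ 2) := by
  have hut : u * t ≤ u ^ 2 + t ^ 2 := by
    nlinarith [two_mul_le_add_sq u t, mul_nonneg hu ht]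
  have hβ : 0 ≤ β := ht.trans htβ
  calc e * (κ * t + C * t ^ 2) ≤ K * u * (κ * t + C * t ^ 2) := by gcongr
    _ = K * (κ + C * t) * (u * t) := by ring
    _ ≤ K * (κ + C * β) * (u ^ 2 + t ^ 2) := by gcongr

theorem general_perturbed_bound_general {d D : ℕ} (x : Fin d → ℝ) (f : (Fin d → ℝ) → (Fin D → ℝ))
    (hf : (fun z ↦ f z - f x - fderiv ℝ f x (z - x)) =O[𝓝 x] fun z ↦ ‖z - x‖ ^ 2)
    (hfx : ∀ i, f x i ≠ 0) :
    ∃ β : ℝ, 0 < β ∧ ∀ K : ℝ, 0 ≤ K →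
      ∃ C : ℝ, ∀ u : ℝ, 0 ≤ u →
        ∀ xh : Fin d → ℝ, rhoV xh x ≤ ENNReal.ofReal β →
        ∀ y : Fin D → ℝ, rhoV y (f xh) ≤ ENNReal.ofReal (K * u) →
          rhoV y (f x) ≤ rhoV y (f xh) + ENNReal.ofReal
            (kccV f x * (rhoV xh x).toReal
              + C * (u ^ 2 + (rhoV xh x).toReal ^ 2)) := by
  obtain ⟨β, hβ, C, hC, hTaylor⟩ := exists_rhoV_apply_le hf hfx
  refine ⟨β, hβ, fun K hK ↦ ⟨C + K * (kccV f x + C * β), fun u hu xh hxh y hy ↦ ?_⟩⟩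
  have htβ : (rhoV xh x).toReal ≤ β := ENNReal.toReal_le_of_le_ofReal hβ.le hxh
  have heu : (rhoV y (f xh)).toReal ≤ K * u := ENNReal.toReal_le_of_le_ofReal (by positivity) hy
  have hfin : rhoV y (f xh) ≠ ⊤ := ne_top_of_le_ne_top ENNReal.ofReal_ne_top hy
  have hκ : 0 ≤ kccV f x := kccV_nonneg f x
  have ht : 0 ≤ (rhoV xh x).toReal := ENNReal.toReal_nonneg
  set t := (rhoV xh x).toReal
  set δ := kccV f x * t + C * t ^ 2
  have hδ : 0 ≤ δ := by positivity
  calc rhoV y (f x)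
      ≤ rhoV y (f xh) + rhoV (f xh) (f x) + rhoV y (f xh) * rhoV (f xh) (f x) :=
        rhoV_le_add_add_mul
    _ ≤ rhoV y (f xh) + ENNReal.ofReal δ + rhoV y (f xh) * ENNReal.ofReal δ := by
        grw [hTaylor xh hxh]
    _ = rhoV y (f xh) + ENNReal.ofReal (δ + (rhoV y (f xh)).toReal * δ) := by
        rw [ENNReal.ofReal_add hδ (by positivity),
          ENNReal.ofReal_mul ENNReal.toReal_nonneg, ENNReal.ofReal_toReal hfin, add_assoc]
    _ ≤ rhoV y (f xh) + ENNReal.ofReal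
          (kccV f x * t + (C + K * (kccV f x + C * β)) * (u ^ 2 + t ^ 2)) := by
        gcongr rhoV y (f xh) + ENNReal.ofReal ?_
        linarith [mul_linear_add_sq_le_mul_sq_add_sq hκ hC hK hu ht htβ heu,
          mul_nonneg hC (sq_nonneg u)]

/-- local sensitivity bound: rounding error at a perturbed argument of a twice
continuously differentiable map in terms of its componentwise condition number.
`y` stands for the computed value `fl(f(x̂))`, assumed to carry a componentwise
relative error `≤ K u` with respect to `f(x̂)`. -/
theorem general_perturbed_bound {d D : ℕ} (x : Fin d → ℝ) (hx : x ≠ 0)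
    (f : (Fin d → ℝ) → (Fin D → ℝ))
    (s : Set (Fin d → ℝ)) (hs : IsOpen s) (hxs : x ∈ s)
    (hf : ContDiffOn ℝ 2 f s)
    (hfx : ∀ i, f x i ≠ 0) :
    ∃ βs : ℝ, 0 < βs ∧ ∀ β : ℝ, 0 ≤ β → β < βs → ∀ K : ℝ, 0 ≤ K →
      ∃ C : ℝ, ∀ u : ℝ, 0 < u →
        ∀ xh : Fin d → ℝ, rhoV xh x ≤ ENNReal.ofReal β →
        ∀ y : Fin D → ℝ, rhoV y (f xh) ≤ ENNReal.ofReal (K * u) →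
          rhoV y (f x) ≤ rhoV y (f xh) + ENNReal.ofReal
            (kccV f x * (rhoV xh x).toReal
              + C * (u ^ 2 + (rhoV xh x).toReal ^ 2)) := by
  obtain ⟨βs, hβs, hbound⟩ := general_perturbed_bound_general x f
    (isBigO_sub_sub_fderiv_sq_of_contDiffAt (hf.contDiffAt (hs.mem_nhds hxs))) hfx
  exact ⟨βs, hβs, fun β _ hβ K hK ↦ (hbound K hK).imp fun C hC u hu xh hxh ↦
    hC u hu.le xh (hxh.trans (ENNReal.ofReal_le_ofReal hβ.le))⟩

end TR
end
end

section
/- Let ψ : ℝ^n → ℝ^n be the softmax. For every s ∈ ℝ^n: (1) ψ is Fréchet differentiable with Jacobian J_ψ(s) = diag(ψ(s)) − ψ(s)ψ(s)ᵀ, which is symmetric positive semidefinite with simple eigenvalue 0 whose eigenvector is the all-ones vector; (2) ‖J_ψ(s)‖_{2,2} ≤ ‖ψ(s)‖_∞, ‖J_ψ(s)‖_{1,∞} = max_{1≤i≤n} ψ(s)_i(1 − ψ(s)_i), and ‖J_ψ(s)‖_{1,1} = ‖J_ψ(s)‖_{∞,∞} = 2 max_{1≤i≤n} ψ(s)_i(1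 − ψ(s)_i); and (3) for s ≠ 0 the mixed and componentwise condition numbers equal κ_{c,∞}(ψ, s) = max_{1≤i≤n} ψ(s)_i · ( |s_i|(1 − 2ψ(s)_i) + ψ(s)ᵀ|s| ) / ‖ψ(s)‖_∞ and κ_{c,c}(ψ, s) = max_{1≤i≤n} ( |s_i|(1 − 2ψ(s)_i) + ψ(s)ᵀ|s| ), and moreover κ_{c,c}(ψ, s) ≤ 2‖s‖_∞. -/
open scoped BigOperators ENNReal

noncomputable section

namespace TR

/-!
For a weight vector `p`, the matrix `C = diag p - p pᵀ` is the covariance of a random basis vector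
with law `p`. Writing `m = p ⬝ᵥ x` for the mean, `C x` has entries `pᵢ (xᵢ - m)` and `xᵀ C x` is the
variance of `x` under `p`. The latter, read as `∑ pᵢ (xᵢ - m)²`, gives positive semidefiniteness;
read as `∑ pᵢ xᵢ² - m²`, it gives `‖C x‖₂² ≤ ‖p‖_∞ xᵀ C x ≤ ‖p‖_∞² ‖x‖₂²`. A positive semidefinite
matrix attains its largest entry on the diagonal, and the remaining norms and condition numbers are
read off the weighted row sums `∑ⱼ |Cᵢⱼ| wⱼ = pᵢ (wᵢ (1 - 2 pᵢ) + ∑ⱼ pⱼ wⱼ)`.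
-/

open scoped Matrix

section Norms

variable {d : ℕ}

lemma abs_le_linf (x : Fin d → ℝ) (i : Fin d) : |x i| ≤ linf x :=
  le_ciSup (f := fun i => |x i|) (Finite.bddAbove_range _) i

lemma linf_nonneg (x : Fin d → ℝ) : 0 ≤ linf x :=
  Real.iSup_nonneg fun _ => abs_nonneg _

lemma sigmaMax_le {B : Matrix (Fin d) (Fin d) ℝ} {c : ℝ} (hc : 0 ≤ c)
    (h : ∀ x, l2 (B *ᵥ x) ≤ c * l2 x) : sigmaMax B ≤ c :=
  Real.iSup_le (fun x => (h x.1).trans_eq (by rw [x.2, mul_one])) hc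

lemma norm11_of_isSymm {A : Matrix (Fin d) (Fin d) ℝ} (hA : A.IsSymm) :
    norm11 A = norminfinf A := by
  simp only [norm11, norminfinf, hA.apply]

lemma two_mul_abs_apply_le_of_posSemidef {ι : Type*} {A : Matrix ι ι ℝ} (hA : A.PosSemidef)
    (i j : ι) : 2 * |A i j| ≤ A i i + A j j := by
  have hsymm : A j i = A i j := by simpa using hA.isHermitian.apply i j
  have hadd := (hA.submatrix ![i, j]).dotProduct_mulVec_nonneg ![1, 1]
  have hsub := (hA.submatrix ![i, j]).dotProduct_mulVec_nonneg ![1, -1]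
  simp only [dotProduct, Matrix.mulVec, Fin.sum_univ_two, star_trivial, Matrix.submatrix_apply,
    Matrix.cons_val_zero, Matrix.cons_val_one, hsymm] at hadd hsub
  have : |A i j| ≤ (A i i + A j j) / 2 := abs_le.2 ⟨by linarith, by linarith⟩
  linarith

lemma norm1inf_of_posSemidef {A : Matrix (Fin d) (Fin d) ℝ} (hA : A.PosSemidef) :
    norm1inf A = ⨆ i, A i i := by
  have hdiag (i : Fin d) : A i i ≤ ⨆ i, A i i :=
    le_ciSup (f := fun i => A i i) (Finite.bddAbove_range _) i
  refine le_antisymm (Real.iSup_le (fun ⟨i, j⟩ => ?_) (Real.iSup_nonneg fun i => hA.diag_nonneg))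
    (Real.iSup_le (fun i => (le_abs_self _).trans ?_) (Real.iSup_nonneg fun _ => abs_nonneg _))
  · linarith [two_mul_abs_apply_le_of_posSemidef hA i j, hdiag i, hdiag j]
  · exact le_ciSup (f := fun q : Fin d × Fin d => |A q.1 q.2|) (Finite.bddAbove_range _) (i, i)

lemma norminfinf_mul_diagonal {k : ℕ} (A : Matrix (Fin k) (Fin d) ℝ) (s : Fin d → ℝ) :
    norminfinf (A * Matrix.diagonal s) = ⨆ i, ∑ j, |A i j| * |s j| := by
  simp only [norminfinf, Matrix.mul_diagonal, abs_mul]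

end Norms

lemma le_one_of_sum_le_one {ι : Type*} [Fintype ι] {p : ι → ℝ} (hp₀ : ∀ i, 0 ≤ p i)
    (hp₁ : ∑ i, p i ≤ 1) (i : ι) : p i ≤ 1 :=
  (Finset.single_le_sum (fun j _ => hp₀ j) (Finset.mem_univ i)).trans hp₁

section CategoricalCov

variable {ι R : Type*} [DecidableEq ι]

/-- Covariance matrix `diag p - p pᵀ` of a random standard basis vector that equals `eᵢ` with
probability `p i`. The Jacobian of the softmax at `s` is `categoricalCov (softmax s)`; no
normalization of `p` is built in. -/
def categoricalCov [Ring R] (p : ι → R) : Matrix ι ι R :=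
  Matrix.diagonal p - Matrix.vecMulVec p p

lemma categoricalCov_eq_of [Ring R] (p : ι → R) :
    categoricalCov p = Matrix.of fun i j => p i * ((if i = j then 1 else 0) - p j) := by
  ext i j
  simp [categoricalCov, Matrix.diagonal_apply, Matrix.vecMulVec_apply, mul_sub]

lemma categoricalCov_isSymm [CommRing R] (p : ι → R) : (categoricalCov p).IsSymm :=
  (Matrix.isSymm_diagonal p).sub (Matrix.transpose_vecMulVec p p)

lemma categoricalCov_apply_self [Ring R] (p : ι → R) (i : ι) :
    categoricalCov p i i = p i * (1 - p i) := by
  simp [categoricalCov_eq_of]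

variable [Fintype ι]

lemma categoricalCov_mulVec_apply [CommRing R] (p x : ι → R) (i : ι) :
    (categoricalCov p *ᵥ x) i = p i * (x i - p ⬝ᵥ x) := by
  simp [categoricalCov, Matrix.sub_mulVec, Matrix.mulVec_diagonal, Matrix.vecMulVec_mulVec, mul_sub,
    mul_comm (p ⬝ᵥ x)]

lemma categoricalCov_mulVec_one [CommRing R] {p : ι → R} (hp : ∑ i, p i = 1) :
    categoricalCov p *ᵥ 1 = 0 := by
  ext i
  simp [categoricalCov_mulVec_apply, dotProduct_one, hp]

lemma exists_eq_const_of_categoricalCov_mulVec_eq_zero [CommRing R] [NoZeroDivisors R]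
    {p x : ι → R} (hp : ∀ i, p i ≠ 0) (hx : categoricalCov p *ᵥ x = 0) :
    ∃ c, x = fun _ => c := by
  refine ⟨p ⬝ᵥ x, funext fun i => sub_eq_zero.1 ?_⟩
  have hi : p i * (x i - p ⬝ᵥ x) = 0 := by rw [← categoricalCov_mulVec_apply, hx, Pi.zero_apply]
  exact (mul_eq_zero.1 hi).resolve_left (hp i)

lemma dotProduct_categoricalCov_mulVec [CommRing R] (p x : ι → R) :
    x ⬝ᵥ categoricalCov p *ᵥ x = ∑ i, p i * x i ^ 2 - (p ⬝ᵥ x) ^ 2 :=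
  calc x ⬝ᵥ categoricalCov p *ᵥ x
      = ∑ i, (p i * x i ^ 2 - p i * x i * (p ⬝ᵥ x)) :=
        Finset.sum_congr rfl fun i _ => by rw [categoricalCov_mulVec_apply]; ring
    _ = ∑ i, p i * x i ^ 2 - (p ⬝ᵥ x) ^ 2 := by
        rw [Finset.sum_sub_distrib, ← Finset.sum_mul, sq (p ⬝ᵥ x), dotProduct]

lemma dotProduct_categoricalCov_mulVec_eq_sum_sub_sq [CommRing R] (p x : ι → R) :
    x ⬝ᵥ categoricalCov p *ᵥ x
      = ∑ i, p i * (x i - p ⬝ᵥ x) ^ 2 + (1 - ∑ i, p i) * (p ⬝ᵥ x) ^ 2 := by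
  have expand : ∑ i, p i * (x i - p ⬝ᵥ x) ^ 2
      = ∑ i, p i * x i ^ 2 - 2 * (p ⬝ᵥ x) * (p ⬝ᵥ x) + (∑ i, p i) * (p ⬝ᵥ x) ^ 2 := by
    nth_rw 3 [dotProduct]
    rw [Finset.mul_sum, Finset.sum_mul, ← Finset.sum_sub_distrib, ← Finset.sum_add_distrib]
    exact Finset.sum_congr rfl fun i _ => by ring
  rw [dotProduct_categoricalCov_mulVec, expand]
  ring

lemma sum_abs_categoricalCov_mul {p : ι → ℝ} (hp₀ : ∀ i, 0 ≤ p i) {i : ι} (hi : p i ≤ 1)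
    (w : ι → ℝ) :
    ∑ j, |categoricalCov p i j| * w j = p i * (w i * (1 - 2 * p i) + ∑ j, p j * w j) := by
  have habs (j : ι) : |categoricalCov p i j|
      = p i * (p j + if i = j then 1 - 2 * p i else 0) := by
    rw [categoricalCov_eq_of, Matrix.of_apply, abs_mul, abs_of_nonneg (hp₀ i)]
    split_ifs with h
    · subst h; rw [abs_of_nonneg (sub_nonneg.2 hi)]; ring
    · rw [zero_sub, abs_neg, abs_of_nonneg (hp₀ j), add_zero]
  simp only [habs, mul_assoc, ← Finset.mul_sum, add_mul, Finset.sum_add_distrib, ite_mul, zero_mul,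
    Finset.sum_ite_eq, Finset.mem_univ, if_true]
  ring

lemma sum_mul_sub_sq_le_dotProduct_categoricalCov_mulVec {p : ι → ℝ} (hp₁ : ∑ i, p i ≤ 1)
    (x : ι → ℝ) :
    ∑ i, p i * (x i - p ⬝ᵥ x) ^ 2 ≤ x ⬝ᵥ categoricalCov p *ᵥ x := by
  rw [dotProduct_categoricalCov_mulVec_eq_sum_sub_sq]
  exact le_add_of_nonneg_right (mul_nonneg (sub_nonneg.2 hp₁) (sq_nonneg _))

lemma categoricalCov_posSemidef {p : ι → ℝ} (hp₀ : ∀ i, 0 ≤ p i) (hp₁ : ∑ i, p i ≤ 1) :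
    (categoricalCov p).PosSemidef :=
  .of_dotProduct_mulVec_nonneg (Matrix.isHermitian_iff_isSymm.2 (categoricalCov_isSymm p)) fun x =>
    (Finset.sum_nonneg fun i _ => mul_nonneg (hp₀ i) (sq_nonneg _)).trans
      (sum_mul_sub_sq_le_dotProduct_categoricalCov_mulVec hp₁ x)

end CategoricalCov

section CategoricalCovNorms

variable {d : ℕ} {p : Fin d → ℝ}

lemma norminfinf_categoricalCov (hp₀ : ∀ i, 0 ≤ p i) (hp : ∑ i, p i = 1) :
    norminfinf (categoricalCov p) = 2 * ⨆ i, p i * (1 - p i) := by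
  rw [norminfinf, Real.mul_iSup_of_nonneg zero_le_two]
  refine iSup_congr fun i => ?_
  have h := sum_abs_categoricalCov_mul hp₀ (le_one_of_sum_le_one hp₀ hp.le i) 1
  simp only [Pi.one_apply, mul_one, one_mul, hp] at h
  rw [h]
  ring

lemma norminfinf_diagonal_inv_mul_categoricalCov_mul_diagonal (hp : ∀ i, 0 < p i)
    (hp₁ : ∑ i, p i ≤ 1) (s : Fin d → ℝ) :
    norminfinf (Matrix.diagonal (fun i => (p i)⁻¹) * categoricalCov p * Matrix.diagonal s)
      = ⨆ i, |s i| * (1 - 2 * p i) + ∑ j, p j * |s j| := by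
  have hp₀ (i : Fin d) : 0 ≤ p i := (hp i).le
  rw [norminfinf_mul_diagonal]
  refine iSup_congr fun i => ?_
  simp only [Matrix.diagonal_mul, abs_mul, abs_of_pos (inv_pos.2 (hp i)), mul_assoc,
    ← Finset.mul_sum]
  rw [sum_abs_categoricalCov_mul hp₀ (le_one_of_sum_le_one hp₀ hp₁ i),
    inv_mul_cancel_left₀ (hp i).ne']

section SubProbability

variable (hp₀ : ∀ i, 0 ≤ p i) (hp₁ : ∑ i, p i ≤ 1)
include hp₀ hp₁

lemma l2_categoricalCov_mulVec_le (x : Fin d → ℝ) :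
    l2 (categoricalCov p *ᵥ x) ≤ linf p * l2 x := by
  have hp (i : Fin d) : p i ≤ linf p := (le_abs_self _).trans (abs_le_linf p i)
  have hsq : ∑ i, (categoricalCov p *ᵥ x) i ^ 2 ≤ linf p ^ 2 * ∑ i, x i ^ 2 :=
    calc ∑ i, (categoricalCov p *ᵥ x) i ^ 2
        = ∑ i, p i * (p i * (x i - p ⬝ᵥ x) ^ 2) :=
          Finset.sum_congr rfl fun i _ => by rw [categoricalCov_mulVec_apply]; ring
      _ ≤ ∑ i, linf p * (p i * (x i - p ⬝ᵥ x) ^ 2) := by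
          gcongr with i
          exacts [mul_nonneg (hp₀ i) (sq_nonneg _), hp i]
      _ ≤ linf p * (x ⬝ᵥ categoricalCov p *ᵥ x) := by
          rw [← Finset.mul_sum]
          exact mul_le_mul_of_nonneg_left
            (sum_mul_sub_sq_le_dotProduct_categoricalCov_mulVec hp₁ x) (linf_nonneg p)
      _ ≤ linf p * ∑ i, p i * x i ^ 2 := by
          rw [dotProduct_categoricalCov_mulVec]
          exact mul_le_mul_of_nonneg_left (sub_le_self _ (sq_nonneg _)) (linf_nonneg p)
      _ ≤ linf p * ∑ i, linf p * x i ^ 2 := by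
          gcongr with i
          exacts [linf_nonneg p, hp i]
      _ = linf p ^ 2 * ∑ i, x i ^ 2 := by rw [← Finset.mul_sum]; ring
  calc l2 (categoricalCov p *ᵥ x)
      ≤ √(linf p ^ 2 * ∑ i, x i ^ 2) := Real.sqrt_le_sqrt hsq
    _ = linf p * l2 x := by
        rw [Real.sqrt_mul (sq_nonneg _), Real.sqrt_sq (linf_nonneg p), l2]

lemma sigmaMax_categoricalCov_le : sigmaMax (categoricalCov p) ≤ linf p :=
  sigmaMax_le (linf_nonneg p) (l2_categoricalCov_mulVec_le hp₀ hp₁)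

lemma norm1inf_categoricalCov : norm1inf (categoricalCov p) = ⨆ i, p i * (1 - p i) := by
  simp only [norm1inf_of_posSemidef (categoricalCov_posSemidef hp₀ hp₁), categoricalCov_apply_self]

lemma norminfinf_categoricalCov_mul_diagonal (s : Fin d → ℝ) :
    norminfinf (categoricalCov p * Matrix.diagonal s)
      = ⨆ i, p i * (|s i| * (1 - 2 * p i) + ∑ j, p j * |s j|) := by
  simp only [norminfinf_mul_diagonal,
    sum_abs_categoricalCov_mul hp₀ (le_one_of_sum_le_one hp₀ hp₁ _) fun j => |s j|]

lemma iSup_abs_mul_add_sum_le (s : Fin d → ℝ) :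
    (⨆ i, |s i| * (1 - 2 * p i) + ∑ j, p j * |s j|) ≤ 2 * linf s := by
  refine Real.iSup_le (fun i => ?_) (mul_nonneg zero_le_two (linf_nonneg s))
  have hentry : |s i| * (1 - 2 * p i) ≤ linf s :=
    (mul_le_of_le_one_right (abs_nonneg _) (by linarith [hp₀ i])).trans (abs_le_linf s i)
  have hmean : ∑ j, p j * |s j| ≤ linf s :=
    calc ∑ j, p j * |s j|
        ≤ ∑ j, p j * linf s := by
          gcongr with j
          exacts [hp₀ j, abs_le_linf s j]
      _ = (∑ j, p j) * linf s := (Finset.sum_mul ..).symm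
      _ ≤ linf s := mul_le_of_le_one_left (linf_nonneg s) hp₁
  linarith

end SubProbability

end CategoricalCovNorms

section Softmax

lemma sum_exp_pos {ι : Type*} [Fintype ι] [Nonempty ι] (s : ι → ℝ) : 0 < ∑ i, Real.exp (s i) :=
  Finset.sum_pos (fun _ _ => Real.exp_pos _) Finset.univ_nonempty

variable {n : ℕ} (s : Fin n → ℝ)

lemma softmax_pos (i : Fin n) : 0 < softmax s i :=
  have : Nonempty (Fin n) := ⟨i⟩
  div_pos (Real.exp_pos _) (sum_exp_pos s)

lemma sum_softmax [Nonempty (Fin n)] : ∑ i, softmax s i = 1 := by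
  simp only [softmax, ← Finset.sum_div]
  exact div_self (sum_exp_pos s).ne'

lemma sum_softmax_le_one : ∑ i, softmax s i ≤ 1 := by
  simp only [softmax, ← Finset.sum_div]
  exact div_self_le_one _

lemma hasFDerivAt_softmax :
    HasFDerivAt softmax
      (LinearMap.toContinuousLinearMap (categoricalCov (softmax s)).mulVecLin) s := by
  rw [hasFDerivAt_pi']
  intro i
  have : Nonempty (Fin n) := ⟨i⟩
  have hZ : ∑ j, Real.exp (s j) ≠ 0 := (sum_exp_pos s).ne'
  have hexp (j : Fin n) : HasFDerivAt (fun x : Fin n → ℝ => Real.exp (x j))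
      (Real.exp (s j) • ContinuousLinearMap.proj (R := ℝ) (φ := fun _ : Fin n => ℝ) j) s :=
    (hasFDerivAt_apply j s).exp
  have hsum := HasFDerivAt.fun_sum (u := Finset.univ) fun j _ => hexp j
  have hquot := (hexp i).mul ((hasDerivAt_inv hZ).comp_hasFDerivAt s hsum)
  refine hquot.congr_fderiv (ContinuousLinearMap.ext fun x => ?_)
  have hmean : softmax s ⬝ᵥ x = (∑ j, Real.exp (s j) * x j) / ∑ j, Real.exp (s j) := by
    simp only [dotProduct, softmax, div_mul_eq_mul_div, Finset.sum_div]
  simp only [ContinuousLinearMap.comp_apply, ContinuousLinearMap.proj_apply,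
    LinearMap.coe_toContinuousLinearMap', Matrix.mulVecLin_apply, categoricalCov_mulVec_apply,
    hmean]
  simp only [neg_smul, smul_neg, Function.comp_apply, add_apply, neg_apply, smul_apply, sum_apply,
    ContinuousLinearMap.proj_apply, smul_eq_mul, softmax]
  field_simp
  ring

end Softmax

/-- Jacobian, norms and condition numbers of the softmax. -/
theorem softmax_conditioning {n : ℕ} (s : Fin n → ℝ)
    (J : Matrix (Fin n) (Fin n) ℝ)
    (hJ : J = Matrix.of fun i j =>
      softmax s i * ((if i = j then 1 else 0) - softmax s j)) :
    (HasFDerivAt softmax (LinearMap.toContinuousLinearMap (Matrix.mulVecLin J)) s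
      ∧ J.IsSymm ∧ J.PosSemidef
      ∧ J.mulVec (fun _ => 1) = 0
      ∧ (∀ y : Fin n → ℝ, J.mulVec y = 0 → ∃ c : ℝ, y = fun _ => c))
    ∧ (sigmaMax J ≤ linf (softmax s)
      ∧ norm1inf J = (⨆ i, softmax s i * (1 - softmax s i))
      ∧ norm11 J = norminfinf J
      ∧ norminfinf J = 2 * ⨆ i, softmax s i * (1 - softmax s i))
    ∧ (s ≠ 0 →
        (norminfinf (J * Matrix.diagonal s) / linf (softmax s)
            = (⨆ i, softmax s i *
                (|s i| * (1 - 2 * softmax s i) + ∑ j, softmax s j * |s j|)) /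
              linf (softmax s))
          ∧ norminfinf (Matrix.diagonal (fun i => (softmax s i)⁻¹) * J * Matrix.diagonal s)
              = (⨆ i, |s i| * (1 - 2 * softmax s i) + ∑ j, softmax s j * |s j|)
          ∧ (⨆ i, |s i| * (1 - 2 * softmax s i) + ∑ j, softmax s j * |s j|)
              ≤ 2 * linf s) := by
  obtain rfl : J = categoricalCov (softmax s) := hJ.trans (categoricalCov_eq_of _).symm
  have hpos := softmax_pos s
  have hnonneg (i : Fin n) : 0 ≤ softmax s i := (hpos i).le
  have hsum := sum_softmax_le_one s
  refine ⟨⟨hasFDerivAt_softmax s, categoricalCov_isSymm _,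
      categoricalCov_posSemidef hnonneg hsum, ?_,
      fun _ => exists_eq_const_of_categoricalCov_mulVec_eq_zero fun i => (hpos i).ne'⟩,
    ⟨sigmaMax_categoricalCov_le hnonneg hsum, norm1inf_categoricalCov hnonneg hsum,
      norm11_of_isSymm (categoricalCov_isSymm _), ?_⟩,
    fun _ => ⟨by rw [norminfinf_categoricalCov_mul_diagonal hnonneg hsum],
      norminfinf_diagonal_inv_mul_categoricalCov_mul_diagonal hpos hsum s,
      iSup_abs_mul_add_sum_le hnonneg hsum s⟩⟩
  · rcases isEmpty_or_nonempty (Fin n) with _ | _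
    · exact Subsingleton.elim _ _
    · exact categoricalCov_mulVec_one (sum_softmax s)
  · rcases isEmpty_or_nonempty (Fin n) with _ | _
    · simp [norminfinf]
    · exact norminfinf_categoricalCov hnonneg (sum_softmax s)

end TR
end
end
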